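/- Consider the fully connected sign network with i.i.d. standard normal weights: ω_0 = ω ∈ {-1,1}^n, ω_t = sign(θ_t ω_{t-1}) for t = 1,...,T_n, with θ_1,...,θ_{T_n} independent n×n matrices of i.i.d. N(0,1) entries, and f_{n,T_n}(ω) = h_n(ω_{T_n}). Let 1/2 ≥ ε_n ↓ 0 with n·ε_n → ∞ and let K_n satisfy K_n/log(1/ε_n) → ∞. If T_n ≥ K_n, then for any Boolean functions {h_n}, {f_{n,T_n}} is quenched quantitatively noise sensitive at level {ε_n}: for every δ > 0 there is N such that for all n ≥ N, P_Θ(Cov_{ω,ω^{ε_n}}(f_{n,T_n}(ω), f_{n,T_n}(ω^{ε_n})) ≤ δ) ≥ 1 − δ. -/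

import Mathlib

open Finset Filter MeasureTheory ProbabilityTheory

noncomputable section

/-- The ±1 real value of a Boolean bit. -/
def chi (b : Bool) : ℝ := if b then 1 else -1

/-- The joint probability of the pair `(ω, ω^ε)`, where `ω` is uniform on `{-1,1}^n` and
`ω^ε` flips each bit of `ω` independently with probability `ε`. -/
def pairWeight (n : ℕ) (ε : ℝ) (ω η : Fin n → Bool) : ℝ :=
  (1 / 2) ^ n * ∏ i, (if ω i = η i then 1 - ε else ε)

/-- Expectation of `g ω` for `ω` uniform on `{-1,1}^n`. -/
def unifMean (n : ℕ) (g : (Fin n → Bool) → ℝ) : ℝ := (∑ ω, g ω) / 2 ^ n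

/-- Expectation of `F ω ω^ε` over the correlated pair `(ω, ω^ε)`. -/
def pairMean (n : ℕ) (ε : ℝ) (F : (Fin n → Bool) → (Fin n → Bool) → ℝ) : ℝ :=
  ∑ ω, ∑ η, pairWeight n ε ω η * F ω η

/-- `Cov_{ω,ω^ε}(g(ω), g(ω^ε))` for a fixed real-valued function `g` on the cube. -/
def noiseCov (n : ℕ) (ε : ℝ) (g : (Fin n → Bool) → ℝ) : ℝ :=
  pairMean n ε (fun ω η => g ω * g η) - unifMean n g ^ 2

/-- `P_{ω,ω^ε}(f(ω) ≠ f(ω^ε))` for a fixed Boolean function `f`. -/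
def disagreeProb (n : ℕ) (ε : ℝ) (f : (Fin n → Bool) → Bool) : ℝ :=
  pairMean n ε (fun ω η => if f ω = f η then 0 else 1)

/-- The sign function with the convention `sgn z = 1` if `z > 0` and `-1` otherwise. -/
def sgn (x : ℝ) : ℝ := if 0 < x then 1 else -1

/-- One layer of the sign network: `x ↦ sign(θ x)`, coordinatewise. -/
def layerMap (n : ℕ) (θ : Fin n → Fin n → ℝ) (x : Fin n → ℝ) : Fin n → ℝ :=
  fun i => sgn (∑ j, θ i j * x j)

/-- The full network: `ω_T` obtained from `ω_0 = x` by `ω_t = sign(θ_t ω_{t-1})`. -/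
def network (n T : ℕ) (Θ : Fin T → Fin n → Fin n → ℝ) (x : Fin n → ℝ) : Fin n → ℝ :=
  (List.ofFn Θ).foldl (fun y θ => layerMap n θ y) x

/-- The Boolean output `f_{n,T}(ω) = h(ω_T)` of the network. -/
def boolOut (n T : ℕ) (h : (Fin n → Bool) → Bool) (Θ : Fin T → Fin n → Fin n → ℝ)
    (ω : Fin n → Bool) : Bool :=
  h fun i => decide (0 < network n T Θ (fun j => chi (ω j)) i)

/-- The ±1-valued output of the network. -/
def netOut (n T : ℕ) (h : (Fin n → Bool) → Bool) (Θ : Fin T → Fin n → Fin n → ℝ)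
    (ω : Fin n → Bool) : ℝ :=
  chi (boolOut n T h Θ ω)

/-- The law of the i.i.d. standard normal weights `Θ = (θ_1, ..., θ_T)`. -/
def weightMeas (n T : ℕ) : Measure (Fin T → Fin n → Fin n → ℝ) :=
  Measure.pi fun _ => Measure.pi fun _ => Measure.pi fun _ => gaussianReal 0 1

/-- The annealed covariance `Cov_{Θ,ω,ω^ε}(f_{n,T}(ω), f_{n,T}(ω^ε))`. -/
def annealedCov (n T : ℕ) (ε : ℝ) (h : (Fin n → Bool) → Bool) : ℝ :=
  (∫ Θ, pairMean n ε (fun ω η => netOut n T h Θ ω * netOut n T h Θ η) ∂weightMeas n T)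
    - (∫ Θ, unifMean n (netOut n T h Θ) ∂weightMeas n T) ^ 2

/-- Walsh coefficient. -/
def walsh (n : ℕ) (g : (Fin n → Bool) → ℝ) (S : Finset (Fin n)) : ℝ :=
  (1 / 2) ^ n * ∑ ω, g ω * ∏ i ∈ S, chi (ω i)

lemma pairWeight_walsh (n : ℕ) (p : ℝ) (ω η : Fin n → Bool) :
    pairWeight n p ω η = (1/2)^n * (1/2)^n * ∑ S : Finset (Fin n), (1 - 2*p)^S.card *
      ((∏ i ∈ S, chi (ω i)) * ∏ i ∈ S, chi (η i)) := by
  unfold pairWeight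
  have h1 : ∀ i, (if ω i = η i then 1 - p else p)
      = (1/2) * ((1 - 2*p) * (chi (ω i) * chi (η i)) + 1) := by
    intro i
    cases ω i <;> cases η i <;> simp [chi] <;> ring
  simp_rw [h1]
  rw [Finset.prod_mul_distrib, Finset.prod_const, Finset.card_univ, Fintype.card_fin, mul_assoc,
    Finset.prod_add_one, Finset.powerset_univ]
  congr 2
  apply Finset.sum_congr rfl
  intro S _
  rw [Finset.prod_mul_distrib, Finset.prod_mul_distrib, Finset.prod_const]

lemma pairMean_walsh (n : ℕ) (p : ℝ) (g : (Fin n → Bool) → ℝ) :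
    pairMean n p (fun ω η => g ω * g η) =
      ∑ S : Finset (Fin n), (1 - 2*p)^S.card * walsh n g S ^ 2 := by
  unfold pairMean walsh
  simp_rw [pairWeight_walsh, mul_pow, sq (∑ ω, g ω * _), Finset.sum_mul_sum, Finset.mul_sum,
    Finset.sum_mul]
  rw [Finset.sum_comm' (s := univ) (t := fun _ => univ) (t' := univ) (s' := fun _ => univ) (by simp)]
  rw [Finset.sum_comm]
  conv_rhs => rw [Finset.sum_comm]
  refine Finset.sum_congr rfl fun ω _ => ?_
  conv_rhs => rw [Finset.sum_comm]
  refine Finset.sum_congr rfl fun η _ => ?_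
  refine Finset.sum_congr rfl fun S _ => ?_
  ring

lemma walsh_empty (n : ℕ) (g : (Fin n → Bool) → ℝ) : walsh n g ∅ = unifMean n g := by
  simp [walsh, unifMean, div_eq_inv_mul]

lemma pairMean_zero (n : ℕ) (F : (Fin n → Bool) → (Fin n → Bool) → ℝ) :
    pairMean n 0 F = unifMean n (fun ω => F ω ω) := by
  unfold pairMean unifMean pairWeight
  rw [Finset.sum_div]
  refine Finset.sum_congr rfl fun ω _ => ?_
  rw [Finset.sum_eq_single ω]
  · simp [div_eq_inv_mul]
  · intro η _ hne
    obtain ⟨i, hi⟩ := Function.ne_iff.mp hne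
    rw [Finset.prod_eq_zero (i := i) (mem_univ _)]
    · simp
    · simp [Ne.symm hi]
  · simp

lemma unifMean_const (n : ℕ) (c : ℝ) : unifMean n (fun _ => c) = c := by
  simp [unifMean]

lemma walsh_parseval (n : ℕ) (g : (Fin n → Bool) → ℝ) (hg : ∀ ω, g ω ^ 2 = 1) :
    ∑ S : Finset (Fin n), walsh n g S ^ 2 = 1 := by
  have h := pairMean_walsh n 0 g
  rw [pairMean_zero] at h
  simp_rw [← sq, hg] at h
  rw [unifMean_const] at h
  simpa using h.symm

lemma noiseCov_walsh (n : ℕ) (p : ℝ) (g : (Fin n → Bool) → ℝ) :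
    noiseCov n p g = ∑ S ∈ univ.erase (∅ : Finset (Fin n)), (1 - 2*p)^S.card * walsh n g S ^ 2 := by
  unfold noiseCov
  rw [pairMean_walsh, ← Finset.add_sum_erase univ _ (mem_univ (∅ : Finset (Fin n))), walsh_empty]
  simp

lemma noiseCov_nonneg (n : ℕ) (p : ℝ) (hp : p ≤ 1/2) (g : (Fin n → Bool) → ℝ) :
    0 ≤ noiseCov n p g := by
  rw [noiseCov_walsh]
  have : 0 ≤ 1 - 2*p := by linarith
  positivity

lemma noiseCov_le (n : ℕ) (p : ℝ) (hp0 : 0 ≤ p) (hp : p ≤ 1) (g : (Fin n → Bool) → ℝ)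
    (hg : ∀ ω, g ω ^ 2 = 1) : noiseCov n p g ≤ |1 - 2*p| := by
  rw [noiseCov_walsh]
  have h1 : |1 - 2*p| ≤ 1 := by rw [abs_le]; constructor <;> linarith
  calc _ ≤ ∑ S ∈ univ.erase (∅ : Finset (Fin n)), |1 - 2*p| * walsh n g S ^ 2 := by
        refine Finset.sum_le_sum fun S hS => ?_
        refine mul_le_mul_of_nonneg_right ?_ (sq_nonneg _)
        refine (le_abs_self _).trans ?_
        rw [abs_pow]
        have : S.card ≠ 0 := by simpa using hS
        exact pow_le_of_le_one (abs_nonneg _) h1 this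
    _ ≤ ∑ S, |1 - 2*p| * walsh n g S ^ 2 := by
        refine Finset.sum_le_sum_of_subset_of_nonneg (Finset.erase_subset _ _) fun S _ _ => ?_
        positivity
    _ = |1 - 2*p| := by rw [← Finset.mul_sum, walsh_parseval n g hg, mul_one]

lemma pairWeight_nonneg (n : ℕ) (p : ℝ) (hp0 : 0 ≤ p) (hp1 : p ≤ 1) (ω η : Fin n → Bool) :
    0 ≤ pairWeight n p ω η := by
  unfold pairWeight
  refine mul_nonneg (by positivity) (Finset.prod_nonneg fun i _ => ?_)
  split_ifs <;> linarith

lemma pairMean_mono (n : ℕ) (p : ℝ) (hp0 : 0 ≤ p) (hp1 : p ≤ 1)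
    (F G : (Fin n → Bool) → (Fin n → Bool) → ℝ) (h : ∀ x y, F x y ≤ G x y) :
    pairMean n p F ≤ pairMean n p G := by
  unfold pairMean
  exact Finset.sum_le_sum fun x _ => Finset.sum_le_sum fun y _ =>
    mul_le_mul_of_nonneg_left (h x y) (pairWeight_nonneg n p hp0 hp1 x y)

lemma pairMean_add (n : ℕ) (p : ℝ) (F G : (Fin n → Bool) → (Fin n → Bool) → ℝ) :
    pairMean n p (fun x y => F x y + G x y) = pairMean n p F + pairMean n p G := by
  simp [pairMean, mul_add, Finset.sum_add_distrib]

lemma pairMean_smul (n : ℕ) (p c : ℝ) (F : (Fin n → Bool) → (Fin n → Bool) → ℝ) :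
    pairMean n p (fun x y => c * F x y) = c * pairMean n p F := by
  simp only [pairMean, Finset.mul_sum]
  refine Finset.sum_congr rfl fun x _ => Finset.sum_congr rfl fun y _ => by ring

lemma pairMean_const (n : ℕ) (p c : ℝ) : pairMean n p (fun _ _ => c) = c := by
  have h := pairMean_walsh n p (fun _ => 1)
  have h1 : pairMean n p (fun _ _ => (1:ℝ)) = 1 := by
    have hw : ∀ S : Finset (Fin n), S ≠ ∅ → walsh n (fun _ => 1) S = 0 := by
      have hp := walsh_parseval n (fun _ => 1) (by simp)
      rw [← Finset.add_sum_erase univ _ (mem_univ (∅ : Finset (Fin n))), walsh_empty,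
        unifMean_const] at hp
      have h0 : ∑ S ∈ univ.erase (∅ : Finset (Fin n)), walsh n (fun _ => 1) S ^ 2 = 0 := by linarith
      rw [Finset.sum_eq_zero_iff_of_nonneg (fun _ _ => sq_nonneg _)] at h0
      intro S hS
      have := h0 S (by simpa using hS)
      simpa using this
    simp only [mul_one] at h
    rw [h, Finset.sum_eq_single ∅]
    · rw [walsh_empty, unifMean_const]; simp
    · intro S _ hS; rw [hw S hS]; simp
    · simp
  have := pairMean_smul n p c (fun _ _ => 1)
  simp only [mul_one] at this
  rw [this, h1, mul_one]

/-- Binomial expectation. -/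
def bino (n : ℕ) (p : ℝ) (φ : ℕ → ℝ) : ℝ :=
  ∑ k ∈ range (n+1), (n.choose k : ℝ) * p^k * (1-p)^(n-k) * φ k

lemma pairMean_hamming (n : ℕ) (p : ℝ) (φ : ℕ → ℝ) :
    pairMean n p (fun x y => φ (hammingDist x y)) = bino n p φ := by
  have key : ∀ ω : Fin n → Bool, ∑ η, pairWeight n p ω η * φ (hammingDist ω η)
      = (1/2)^n * bino n p φ := by
    intro ω
    let e : Finset (Fin n) ≃ (Fin n → Bool) :=
      { toFun := fun S i => if i ∈ S then !(ω i) else ω i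
        invFun := fun η => univ.filter fun i => ω i ≠ η i
        left_inv := by
          intro S; ext i
          by_cases hi : i ∈ S <;> simp [hi]
        right_inv := by
          intro η; ext i
          by_cases hi : ω i = η i
          · simp [hi]
          · simp [hi]; cases h1 : ω i <;> cases h2 : η i <;> simp_all }
    rw [← e.sum_comp]
    have h1 : ∀ S : Finset (Fin n), pairWeight n p ω (e S) * φ (hammingDist ω (e S))
        = (1/2)^n * (p^S.card * (1-p)^(n - S.card) * φ S.card) := by
      intro S
      have h2 : ∀ i, (ω i = e S i) ↔ i ∉ S := by
        intro i; by_cases hi : i ∈ S <;> simp [e, hi]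
      have h3 : hammingDist ω (e S) = S.card := by
        unfold hammingDist
        congr 1; ext i
        have := h2 i
        simp only [ne_eq, mem_filter, mem_univ, true_and, this, not_not]
      rw [h3, pairWeight, mul_assoc, mul_assoc]
      congr 1
      rw [← mul_assoc]
      congr 1
      simp_rw [h2]
      rw [Finset.prod_ite]
      simp only [prod_const, not_not, filter_mem_eq_inter, univ_inter]
      rw [mul_comm]
      congr 2
      rw [show (univ.filter fun x => x ∉ S) = Sᶜ by ext; simp, card_compl, Fintype.card_fin]
    simp_rw [h1]
    rw [← Finset.mul_sum, ← Finset.powerset_univ,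
      Finset.sum_powerset_apply_card (fun k => p^k * (1-p)^(n-k) * φ k)]
    rw [card_univ, Fintype.card_fin, bino]
    congr 1
    refine Finset.sum_congr rfl fun k _ => ?_
    rw [nsmul_eq_mul]; ring
  unfold pairMean
  simp_rw [key]
  simp
  
lemma bino_one (n : ℕ) (p : ℝ) : bino n p (fun _ => 1) = 1 := by
  rw [← pairMean_hamming, pairMean_const]

lemma bino_add (n : ℕ) (p : ℝ) (φ ψ : ℕ → ℝ) :
    bino n p (fun k => φ k + ψ k) = bino n p φ + bino n p ψ := by
  simp [bino, mul_add, Finset.sum_add_distrib]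

lemma bino_smul (n : ℕ) (p c : ℝ) (φ : ℕ → ℝ) :
    bino n p (fun k => c * φ k) = c * bino n p φ := by
  simp only [bino, Finset.mul_sum]
  refine Finset.sum_congr rfl fun x _ => by ring

lemma bino_mono (n : ℕ) (p : ℝ) (hp0 : 0 ≤ p) (hp1 : p ≤ 1) (φ ψ : ℕ → ℝ)
    (h : ∀ k ≤ n, φ k ≤ ψ k) : bino n p φ ≤ bino n p ψ := by
  have : 0 ≤ 1 - p := by linarith
  refine Finset.sum_le_sum fun k hk => mul_le_mul_of_nonneg_left (h k ?_) (by positivity)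
  simpa [Nat.lt_succ_iff] using hk

lemma bino_symm (n : ℕ) (p : ℝ) (φ : ℕ → ℝ) :
    bino n p (fun k => φ (n - k)) = bino n (1-p) φ := by
  unfold bino
  rw [← Finset.sum_range_reflect]
  refine Finset.sum_congr rfl fun k hk => ?_
  have hk : k ≤ n := by simpa [Nat.lt_succ_iff] using hk
  rw [show n + 1 - 1 - k = n - k by omega, Nat.choose_symm hk]
  simp only [show n - (n-k) = k by omega]
  ring

/-- Size-bias step. -/
lemma bino_shift (n : ℕ) (p : ℝ) (hp0 : 0 < p) (hp1 : p ≤ 1) (φ : ℕ → ℝ) (h0 : 0 ≤ φ 0) :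
    bino n p (fun k => φ (k+1) / (k+1)) ≤ bino (n+1) p φ / ((n+1) * p) := by
  rw [le_div_iff₀ (by positivity)]
  unfold bino
  rw [Finset.sum_range_succ' _ (n+1), Finset.sum_mul]
  have h1 : 0 ≤ ((n+1).choose 0 : ℝ) * p^0 * (1-p)^(n+1-0) * φ 0 := by
    have : 0 ≤ 1 - p := by linarith
    positivity
  refine le_trans (le_of_eq ?_) (le_add_of_nonneg_right h1)
  refine Finset.sum_congr rfl fun k hk => ?_
  have := Nat.add_one_mul_choose_eq n k
  have h2 : ((n:ℝ)+1) * n.choose k = (n+1).choose (k+1) * (k+1) := by exact_mod_cast this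
  rw [show n + 1 - (k+1) = n - k by omega]
  have hk : (k:ℝ)+1 ≠ 0 := by positivity
  field_simp
  linear_combination p^(k+1) * (1-p)^(n-k) * φ (k+1) * h2

lemma bino_inv1 (n : ℕ) (p : ℝ) (hp0 : 0 < p) (hp1 : p ≤ 1) :
    bino n p (fun k => 1 / ((k:ℝ)+1)) ≤ 1 / ((n+1) * p) := by
  have := bino_shift n p hp0 hp1 (fun _ => 1) (by norm_num)
  rwa [bino_one] at this

lemma bino_inv2 (n : ℕ) (p : ℝ) (hp0 : 0 < p) (hp1 : p ≤ 1) :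
    bino n p (fun k => 1 / (((k:ℝ)+1)*(k+2))) ≤ 1 / ((n+1) * (n+2) * p^2) := by
  have := bino_shift n p hp0 hp1 (fun k => 1 / ((k:ℝ)+1)) (by norm_num)
  have h2 := bino_inv1 (n+1) p hp0 hp1
  have h3 : bino (n+1) p (fun k => 1 / ((k:ℝ)+1)) / ((n+1) * p) ≤ 1 / ((n+1) * (n+2) * p^2) := by
    calc _ ≤ 1 / ((((n+1:ℕ):ℝ)+1) * p) / ((n+1) * p) := by gcongr
      _ = _ := by push_cast; field_simp; ring
  refine le_trans (le_of_eq ?_) (this.trans h3)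
  congr 1; ext k
  push_cast
  field_simp; ring

lemma bino_div (n : ℕ) (p : ℝ) (hp0 : 0 < p) (hp1 : p ≤ 1) :
    bino n p (fun k => (n:ℝ) / k) ≤ 1/p + 3 / (n * p^2) := by
  rcases Nat.eq_zero_or_pos n with rfl | hn
  · simp [bino]; positivity
  have hn' : (0:ℝ) < n := by exact_mod_cast hn
  have h1 : bino n p (fun k => (n:ℝ) / k) ≤
      bino n p (fun k => n * (1 / ((k:ℝ)+1)) + (n*3) * (1 / (((k:ℝ)+1)*(k+2)))) := by
    refine bino_mono n p hp0.le hp1 _ _ fun k _ => ?_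
    rcases Nat.eq_zero_or_pos k with rfl | hk
    · simp; positivity
    have hk' : (1:ℝ) ≤ k := by exact_mod_cast hk
    have e : n * (1 / ((k:ℝ)+1)) + (n*3) * (1 / (((k:ℝ)+1)*(k+2))) - (n:ℝ)/k
       = n * (2 * (k - 1)) / (k * (k+1) * (k+2)) := by field_simp; ring
    have : 0 ≤ n * (2 * ((k:ℝ) - 1)) / (k * (k+1) * (k+2)) := by
      have : 0 ≤ (k:ℝ) - 1 := by linarith
      positivity
    linarith
  rw [bino_add, bino_smul, bino_smul] at h1
  have h2 := mul_le_mul_of_nonneg_left (bino_inv1 n p hp0 hp1) hn'.le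
  have h3 := mul_le_mul_of_nonneg_left (bino_inv2 n p hp0 hp1) (by positivity : 0 ≤ (n:ℝ)*3)
  have h4 : (n:ℝ) * (1 / ((n+1) * p)) ≤ 1/p := by
    rw [mul_one_div, div_le_div_iff₀ (by positivity) (by positivity)]; nlinarith
  have h5 : (n:ℝ) * 3 * (1 / ((n+1) * (n+2) * p^2)) ≤ 3 / (n * p^2) := by
    rw [mul_one_div, div_le_div_iff₀ (by positivity) (by positivity)]
    have : 0 < p^2 := by positivity
    nlinarith [mul_pos hn' this]
  linarith

lemma bino_zero (n : ℕ) (hn : 0 < n) (p : ℝ) (hp0 : 0 < p) (hp1 : p ≤ 1) :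
    bino n p (fun k => if k = 0 then 1 else 0) ≤ 1 / (n * p) := by
  have hn' : (0:ℝ) < n := by exact_mod_cast hn
  calc _ ≤ bino n p (fun k => 1 / ((k:ℝ)+1)) := by
        refine bino_mono n p hp0.le hp1 _ _ fun k _ => ?_
        split_ifs with h
        · simp [h]
        · positivity
    _ ≤ _ := bino_inv1 n p hp0 hp1
    _ ≤ _ := by gcongr; linarith

/-- indicator of the absorbing states -/
def bd (n k : ℕ) : ℝ := (if k = 0 then 1 else 0) + (if n - k = 0 then 1 else 0)

/-- The Lyapunov function. -/
def lyap (n k : ℕ) : ℝ := (1/4) * ((n:ℝ) / k + (n:ℝ) / ((n - k : ℕ):ℝ)) + ((-1) + bd n k)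

lemma bino_bd (n : ℕ) (hn : 0 < n) (p : ℝ) (hp0 : 0 < p) (hp1 : p < 1) :
    bino n p (bd n) ≤ 1 / (n * p) + 1 / (n * (1-p)) := by
  have h1 := bino_zero n hn p hp0 hp1.le
  have h2 := bino_zero n hn (1-p) (by linarith) (by linarith)
  rw [← bino_symm] at h2
  have : bino n p (bd n) = _ := bino_add n p (fun k => if k = 0 then 1 else 0)
    (fun k => if n - k = 0 then 1 else 0)
  linarith

lemma bino_lyap (n : ℕ) (hn : 0 < n) (p : ℝ) (hp0 : 0 < p) (hp1 : p < 1) :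
    bino n p (lyap n) ≤ (1/4) * (1/p + 1/(1-p) + 3/(n*p^2) + 3/(n*(1-p)^2)) - 1
      + (1 / (n * p) + 1 / (n * (1-p))) := by
  have h0 : bino n p (lyap n) = (1/4) * (bino n p (fun k => (n:ℝ)/k) +
      bino n p (fun k => (n:ℝ) / ((n-k:ℕ):ℝ))) + (-1 + bino n p (bd n)) := by
    have e1 : bino n p (lyap n) = _ :=
      bino_add n p (fun k => (1/4) * ((n:ℝ) / k + (n:ℝ) / ((n - k : ℕ):ℝ)))
        (fun k => (-1) + bd n k)
    have e2 := bino_smul n p (1/4) (fun k => (n:ℝ) / k + (n:ℝ) / ((n - k : ℕ):ℝ))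
    have e3 := bino_add n p (fun k => (n:ℝ) / k) (fun k => (n:ℝ) / ((n - k : ℕ):ℝ))
    have e4 := bino_add n p (fun _ => -1) (bd n)
    have e5 := bino_smul n p (-1) (fun _ => 1)
    rw [bino_one, mul_one] at e5
    rw [e1, e2, e3, e4, e5]
  have h1 := bino_div n p hp0 hp1.le
  have h2 := bino_div n (1-p) (by linarith) (by linarith)
  rw [← bino_symm n p (fun k => (n:ℝ)/k)] at h2
  have h3 := bino_bd n hn p hp0 hp1
  rw [h0]
  linarith

lemma lyap_nonneg (n : ℕ) (hn : 0 < n) (k : ℕ) (hk : k ≤ n) : 0 ≤ lyap n k := by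
  have hn' : (0:ℝ) < n := by exact_mod_cast hn
  unfold lyap bd
  rcases Nat.eq_zero_or_pos k with rfl | h
  · simp [hn'.ne', hn.ne']
  rcases Nat.eq_zero_or_pos (n-k) with h' | h'
  · rw [h']; simp; split_ifs
    · positivity
    · positivity
  have hk' : (0:ℝ) < k := by exact_mod_cast h
  have hm : (0:ℝ) < ((n-k:ℕ):ℝ) := by exact_mod_cast h'
  have e : (n:ℝ) = k + ((n-k:ℕ):ℝ) := by push_cast [hk]; ring
  rw [if_neg h.ne', if_neg h'.ne', e]
  generalize ((n-k:ℕ):ℝ) = m at *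
  have : (1/4) * (((k:ℝ)+m)/k + (k+m)/m) + (-1+(0+0)) = ((k:ℝ)-m)^2/(4*k*m) := by field_simp; ring
  rw [this]; positivity

lemma lyap_interior (n k : ℕ) (h0 : 0 < k) (h1 : k < n) :
    lyap n k = (1/4) * ((n:ℝ) / k + (n:ℝ) / (n - k)) - 1 := by
  unfold lyap bd
  rw [if_neg h0.ne', if_neg (by omega)]
  push_cast [h1.le]; ring

lemma trig_key_pos (α : ℝ) (h0 : 0 ≤ α) (h1 : α ≤ Real.pi/2) :
    (2*α/Real.pi)^2 * (1 + (1/10) * Real.cos α ^ 2) ≤ Real.sin α ^ 2 := by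
  have hpi := Real.pi_gt_d2
  have hpi' := Real.pi_lt_d2
  rcases le_or_gt α 1 with h | h
  · rcases h0.eq_or_lt with rfl | hpos
    · simp
    have hs := Real.sin_gt_sub_cube hpos
    have hs2 : (3/4) * α ≤ Real.sin α := by nlinarith [pow_le_one₀ h0 h (n := 2)]
    have h2 : 2*α/Real.pi ≤ (2/3.14)*α := by
      rw [div_le_iff₀ (by positivity)]; nlinarith
    have h3 : 0 ≤ 2*α/Real.pi := by positivity
    have h4 : Real.cos α ^ 2 ≤ 1 := Real.cos_sq_le_one α
    have h5 : (2*α/Real.pi)^2 ≤ ((2/3.14)*α)^2 := by gcongr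
    have h6 : ((3/4)*α)^2 ≤ Real.sin α ^ 2 := by gcongr
    calc _ ≤ ((2/3.14)*α)^2 * (1 + (1/10) * 1) := by gcongr
      _ ≤ ((3/4)*α)^2 := by nlinarith [sq_nonneg α]
      _ ≤ _ := h6
  · obtain ⟨β, hβ⟩ : ∃ β, β = Real.pi/2 - α := ⟨_, rfl⟩
    have hα : α = Real.pi/2 - β := by linarith
    have hβ0 : 0 ≤ β := by linarith
    have hβ1 : β ≤ 0.6 := by linarith
    rw [hα, Real.cos_pi_div_two_sub, Real.sin_pi_div_two_sub]
    have hc := Real.one_sub_sq_div_two_le_cos (x := β)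
    have hs : Real.sin β ≤ β := Real.sin_le hβ0
    have hs0 : 0 ≤ Real.sin β := Real.sin_nonneg_of_nonneg_of_le_pi hβ0 (by linarith)
    have hr : 2*(Real.pi/2 - β)/Real.pi ≤ 1 - 0.63*β := by
      rw [div_le_iff₀ (by positivity)]; nlinarith
    have hr0 : 0 ≤ 2*(Real.pi/2 - β)/Real.pi := by
      apply div_nonneg <;> linarith
    have hc' : 1 - 0.3*β ≤ Real.cos β := by nlinarith
    calc _ ≤ (1 - 0.63*β)^2 * (1 + (1/10) * β^2) := by gcongr
      _ ≤ (1 - 0.3*β)^2 := by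
        have : (1 - 0.63*β)^2 ≤ 1 := by nlinarith
        have h7 : (1 - 0.63*β)^2 * β^2 ≤ 1 * β^2 := by gcongr
        nlinarith
      _ ≤ _ := by gcongr; linarith

lemma trig_key (α : ℝ) (h : |α| ≤ Real.pi/2) :
    (2*α/Real.pi)^2 * (1 + (1/10) * Real.cos α ^ 2) ≤ Real.sin α ^ 2 := by
  rcases le_total 0 α with h0 | h0
  · exact trig_key_pos α h0 (by rwa [abs_of_nonneg h0] at h)
  · have := trig_key_pos (-α) (by linarith) (by rwa [abs_of_nonpos h0] at h)
    rw [Real.cos_neg, Real.sin_neg] at this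
    calc _ = (2*(-α)/Real.pi)^2 * (1 + (1/10) * Real.cos α ^ 2) := by ring
      _ ≤ _ := this
      _ = _ := by ring

lemma contraction (ψ : ℝ) (h0 : 0 < ψ) (h1 : ψ < Real.pi/2) (p x : ℝ) (hp : p = 2*ψ/Real.pi)
    (hx : x = Real.sin ψ ^ 2) :
    1/(4*(p*(1-p))) - 1 ≤ (10/11) * (1/(4*(x*(1-x))) - 1) := by
  have hpi := Real.pi_pos
  have hs : 0 < Real.sin ψ := Real.sin_pos_of_pos_of_lt_pi h0 (by linarith)
  have hc : 0 < Real.cos ψ := Real.cos_pos_of_mem_Ioo ⟨by linarith, h1⟩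
  have hp0 : 0 < p := by rw [hp]; positivity
  have hp1 : p < 1 := by rw [hp, div_lt_one hpi]; linarith
  have key := trig_key (Real.pi/2 - 2*ψ) (by rw [abs_le]; constructor <;> linarith)
  rw [Real.cos_pi_div_two_sub, Real.sin_pi_div_two_sub] at key
  have hr : 2*(Real.pi/2 - 2*ψ)/Real.pi = 1 - 2*p := by rw [hp]; field_simp
  rw [hr] at key
  have hcx : Real.cos ψ ^ 2 = 1 - x := by rw [hx, Real.cos_sq']
  have hx0 : 0 < x := by rw [hx]; positivity
  have hx1 : 0 < 1 - x := by rw [← hcx]; positivity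
  have h2s : Real.sin (2*ψ) ^ 2 = 4*(x*(1-x)) := by
    rw [Real.sin_two_mul, ← hcx, hx]; ring
  have h2c : Real.cos (2*ψ) ^ 2 = 1 - 4*(x*(1-x)) := by rw [Real.cos_sq', h2s]
  rw [h2s, h2c] at key
  have hu : 0 < x*(1-x) := by positivity
  have hv : 0 < p*(1-p) := mul_pos hp0 (by linarith)
  have e : (1-2*p)^2 = 1 - 4*(p*(1-p)) := by ring
  rw [e] at key
  generalize x*(1-x) = u at *
  generalize p*(1-p) = v at *
  rw [← sub_nonneg]
  have : (10/11) * (1/(4*u) - 1) - (1/(4*v) - 1) = (10*v + 4*u*v - 11*u)/(44*u*v) := by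
    field_simp; ring
  rw [this]
  apply div_nonneg _ (by positivity)
  nlinarith

set_option maxHeartbeats 1000000 in
lemma drift (n d : ℕ) (h0 : 0 < d) (h1 : d < n) (ψ p : ℝ) (hψ0 : 0 < ψ) (hψ1 : ψ < Real.pi/2)
    (hp : p = 2*ψ/Real.pi) (hs : Real.sin ψ ^ 2 = d / n) :
    0 < p ∧ p < 1 ∧ bino n p (lyap n) ≤ (10/11 + 20/n) * lyap n d + 20/n ∧
      bino n p (bd n) ≤ 4 / √n ∧ (1-2*p)^2 ≤ lyap n d := by
  have hpi := Real.pi_pos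
  have hpi' := Real.pi_lt_d2
  have hn : (0:ℝ) < n := by exact_mod_cast (h0.trans h1)
  have hd : (1:ℝ) ≤ d := by exact_mod_cast h0
  have hdn : (d:ℝ) + 1 ≤ n := by exact_mod_cast h1
  have hp0 : 0 < p := by rw [hp]; positivity
  have hp1 : p < 1 := by rw [hp, div_lt_one hpi]; linarith
  have hq : 1 - p = 2*(Real.pi/2-ψ)/Real.pi := by rw [hp]; field_simp
  have hpx : 0.4 * ((d:ℝ)/n) ≤ p^2 := by
    rw [← hs, hp, div_pow, le_div_iff₀ (by positivity)]
    have : Real.sin ψ ^ 2 ≤ ψ^2 := by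
      gcongr
      · exact Real.sin_nonneg_of_nonneg_of_le_pi hψ0.le (by linarith)
      · exact Real.sin_le hψ0.le
    have h2 : Real.pi^2 ≤ 10 := by nlinarith
    nlinarith [sq_nonneg (Real.sin ψ)]
  have hqx : 0.4 * (((n:ℝ)-d)/n) ≤ (1-p)^2 := by
    have : ((n:ℝ)-d)/n = Real.sin (Real.pi/2-ψ) ^ 2 := by
      rw [Real.sin_pi_div_two_sub, Real.cos_sq', hs]; field_simp
    rw [this, hq, div_pow, le_div_iff₀ (by positivity)]
    have : Real.sin (Real.pi/2-ψ) ^ 2 ≤ (Real.pi/2-ψ)^2 := by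
      gcongr
      · exact Real.sin_nonneg_of_nonneg_of_le_pi (by linarith) (by linarith)
      · exact Real.sin_le (by linarith)
    have h2 : Real.pi^2 ≤ 10 := by nlinarith
    nlinarith [sq_nonneg (Real.sin (Real.pi/2-ψ))]
  have hq0 : 0 < 1 - p := by linarith
  have hnd : (0:ℝ) < n - d := by linarith
  have hL := lyap_interior n d h0 h1
  have hcon := contraction ψ hψ0 hψ1 p (d/n) hp hs.symm
  have e1 : 1/(4*(p*(1-p))) = (1/4)*(1/p + 1/(1-p)) := by field_simp; ring
  have e2 : 1/(4*((d:ℝ)/n*(1-d/n))) = (1/4)*((n:ℝ)/d + n/(n-d)) := by field_simp; ring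
  rw [e1, e2] at hcon
  have hcon' : (1/4)*(1/p + 1/(1-p)) - 1 ≤ 10/11 * lyap n d := by rw [hL]; exact hcon
  have i1 : 1/p^2 ≤ 2.5 * (n/d) := by
    rw [div_le_iff₀ (by positivity)]
    calc (1:ℝ) = 2.5 * (n/d) * (0.4 * (d/n)) := by field_simp; norm_num
      _ ≤ _ := by gcongr
  have i2 : 1/(1-p)^2 ≤ 2.5 * (n/(n-d)) := by
    rw [div_le_iff₀ (by positivity)]
    calc (1:ℝ) = 2.5 * (n/(n-d)) * (0.4 * ((n-d)/n)) := by field_simp; norm_num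
      _ ≤ _ := by gcongr
  have i3 : 1/p ≤ 1/p^2 := by
    gcongr; nlinarith
  have i4 : 1/(1-p) ≤ 1/(1-p)^2 := by
    gcongr; nlinarith
  have hB := bino_lyap n (h0.trans h1) p hp0 hp1
  have hbd := bino_bd n (h0.trans h1) p hp0 hp1
  refine ⟨hp0, hp1, ?_, ?_, ?_⟩
  · have k1 : 3/(n*p^2) = (3/n) * (1/p^2) := by field_simp
    have k2 : 3/(n*(1-p)^2) = (3/n) * (1/(1-p)^2) := by field_simp
    have k3 : 1/(n*p) = (1/n) * (1/p) := by field_simp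
    have k4 : 1/(n*(1-p)) = (1/n) * (1/(1-p)) := by field_simp
    have hi : (0:ℝ) < 1/n := by positivity
    have k5 : (3/(n:ℝ)) = 3 * (1/n) := by ring
    have k6 : (20/(n:ℝ)) = 20 * (1/n) := by ring
    have hLL : (n:ℝ)/d + n/(n-d) = 4 * (lyap n d + 1) := by rw [hL]; ring
    have j : (1/4) * ((3 * (1/n)) * (1/p^2) + (3 * (1/n)) * (1/(1-p)^2))
        + ((1/n)*(1/p) + (1/n)*(1/(1-p))) ≤ (1/(n:ℝ)) * (20 * (lyap n d + 1)) := by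
      have : (1/4) * ((3 * (1/(n:ℝ))) * (1/p^2) + (3 * (1/n)) * (1/(1-p)^2))
        + ((1/n)*(1/p) + (1/n)*(1/(1-p))) = (1/(n:ℝ)) * ((3/4)*(1/p^2 + 1/(1-p)^2) + (1/p+1/(1-p))) := by
        ring
      rw [this]
      apply mul_le_mul_of_nonneg_left _ hi.le
      have hge : 0 ≤ lyap n d := lyap_nonneg n (h0.trans h1) d h1.le
      linarith
    rw [k1, k2, k3, k4, k5] at hB
    rw [k6]
    linarith
  · have hsn : 0 < √(n:ℝ) := Real.sqrt_pos.mpr hn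
    have hsq : √(n:ℝ)^2 = n := Real.sq_sqrt hn.le
    have low : ∀ q : ℝ, 0 < q → 0.4 * (1/n) ≤ q^2 → 1/(n*q) ≤ 2/√n := by
      intro q hq h
      have h6 : 0.5/√n ≤ q := by
        apply le_of_sq_le_sq _ hq.le
        rw [div_pow, hsq]
        refine le_trans ?_ h
        rw [mul_one_div]; gcongr; norm_num
      rw [div_le_div_iff₀ (by positivity) hsn]
      rw [div_le_iff₀ hsn] at h6
      nlinarith
    have l1 := low p hp0 (hpx.trans' (by gcongr))
    have l2 := low (1-p) hq0 (hqx.trans' (by gcongr; linarith))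
    have : 4/√(n:ℝ) = 2/√n + 2/√n := by ring
    linarith
  · have hge : 0 ≤ lyap n d := lyap_nonneg n (h0.trans h1) d h1.le
    have hv : 0 < p*(1-p) := by positivity
    have : (1-2*p)^2 ≤ (1/4)*(1/p + 1/(1-p)) - 1 := by
      rw [← e1]
      have e : (1-2*p)^2 = 1 - 4*(p*(1-p)) := by ring
      rw [e]
      generalize p*(1-p) = v at *
      have : 1/(4*v) - 1 - (1 - 4*v) = (4*v-1)^2/(4*v) := by field_simp; ring
      have h8 : 0 ≤ (4*v-1)^2/(4*v) := by positivity
      linarith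
    linarith

lemma gpdf (x : ℝ) : gaussianPDFReal 0 1 x = (√(2*Real.pi))⁻¹ * Real.exp (-(x^2/2)) := by
  simp [gaussianPDFReal_def, neg_div]

lemma inner_gauss (u : ℝ) :
    ∫ y : ℝ, |y| * (gaussianPDFReal 0 1 y * gaussianPDFReal 0 1 (|y| * u)) = (Real.pi)⁻¹ * (1+u^2)⁻¹ := by
  have hb : 0 < (1+u^2)/2 := by positivity
  have h1 : ∀ y : ℝ, |y| * (gaussianPDFReal 0 1 y * gaussianPDFReal 0 1 (|y| * u))
      = (fun r : ℝ => (2*Real.pi)⁻¹ * (r * Real.exp (-((1+u^2)/2) * r^2))) |y| := by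
    intro y
    simp only [gpdf]
    have : (√(2*Real.pi))⁻¹ * (√(2*Real.pi))⁻¹ = (2*Real.pi)⁻¹ := by
      rw [← mul_inv, Real.mul_self_sqrt (by positivity)]
    rw [← this, show -((1+u^2)/2) * |y|^2 = -(y^2/2) + -((|y| * u)^2/2) by
      rw [← sq_abs y]; ring, Real.exp_add]
    ring
  rw [integral_congr_ae (Eventually.of_forall h1),
    integral_comp_abs (f := fun r : ℝ => (2*Real.pi)⁻¹ * (r * Real.exp (-((1+u^2)/2) * r^2))),
    integral_const_mul]
  have h2 : ∫ r in Set.Ioi (0:ℝ), r * Real.exp (-((1+u^2)/2) * r^2) = (2*((1+u^2)/2))⁻¹ := by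
    have := integral_mul_cexp_neg_mul_sq (b := (((1+u^2)/2 : ℝ) : ℂ)) (by rw [Complex.ofReal_re]; exact hb)
    have h3 : ∀ r : ℝ, (r:ℂ) * Complex.exp (-(((1+u^2)/2 : ℝ) : ℂ) * (r:ℂ)^2)
       = ((r * Real.exp (-((1+u^2)/2) * r^2) : ℝ) : ℂ) := by intro r; push_cast; rfl
    simp_rw [h3] at this
    rw [integral_complex_ofReal] at this
    have h4 : (2 * (((1+u^2)/2 : ℝ) : ℂ))⁻¹ = (((2*((1+u^2)/2))⁻¹ : ℝ) : ℂ) := by push_cast; rfl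
    rw [h4] at this
    exact_mod_cast this
  rw [h2]
  field_simp

lemma slice_gauss (s : ℝ) (hs : 0 ≤ s) (x : ℝ) :
    (gaussianReal 0 1).real {y | |y| < s * |x|}
      = ∫ u in (-s)..s, |x| * gaussianPDFReal 0 1 (|x| * u) := by
  have h0 : {y : ℝ | |y| < s * |x|} = Set.Ioo (|x| * (-s)) (|x| * s) := by
    ext y; simp [abs_lt, mul_comm]
  rw [h0, Measure.real, gaussianReal_apply_eq_integral _ (by norm_num), ENNReal.toReal_ofReal]
  · rw [← integral_Ioc_eq_integral_Ioo, ← intervalIntegral.integral_of_le,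
      intervalIntegral.integral_const_mul, intervalIntegral.mul_integral_comp_mul_left]
    have := abs_nonneg x
    nlinarith
  · exact integral_nonneg fun _ => gaussianPDFReal_nonneg _ _ _

lemma orthant (s : ℝ) (hs : 0 ≤ s) :
    ((gaussianReal 0 1).prod (gaussianReal 0 1)).real {z : ℝ × ℝ | |z.2| < s * |z.1|}
      = 2 * Real.arctan s / Real.pi := by
  have hS : MeasurableSet {z : ℝ × ℝ | |z.2| < s * |z.1|} :=
    measurableSet_lt (by fun_prop) (by fun_prop)
  have h1 : ((gaussianReal 0 1).prod (gaussianReal 0 1)).real {z : ℝ × ℝ | |z.2| < s * |z.1|}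
      = ∫ x, (gaussianReal 0 1).real {y | |y| < s * |x|} ∂(gaussianReal 0 1) := by
    rw [← integral_indicator_one hS, integral_prod]
    · congr 1; ext x
      rw [← integral_indicator_one (by exact measurableSet_lt (by fun_prop) (by fun_prop))]
      rfl
    · exact (integrable_const 1).indicator hS
  rw [h1, integral_gaussianReal_eq_integral_smul (by norm_num)]
  simp_rw [slice_gauss s hs, smul_eq_mul, ← intervalIntegral.integral_const_mul]
  have hle : -s ≤ s := by linarith
  simp_rw [intervalIntegral.integral_of_le hle]
  rw [integral_integral_swap]
  · have : ∀ u : ℝ, ∫ x : ℝ, gaussianPDFReal 0 1 x * (|x| * gaussianPDFReal 0 1 (|x| * u))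
        = (Real.pi)⁻¹ * (1+u^2)⁻¹ := by
      intro u; rw [← inner_gauss u]; congr 1; ext x; ring
    simp_rw [this]
    rw [← intervalIntegral.integral_of_le hle, intervalIntegral.integral_const_mul,
      integral_inv_one_add_sq, Real.arctan_neg]
    ring
  · have hI : Integrable (fun x : ℝ => |x * Real.exp (-(1/2) * x^2)|) :=
      (integrable_mul_exp_neg_mul_sq (by norm_num : (0:ℝ) < 1/2)).abs
    have hI2 := hI.mul_prod (g := fun _ : ℝ => (1:ℝ)) (ν := volume.restrict (Set.Ioc (-s) s))
      (integrable_const 1)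
    refine hI2.mono' ?_ (Eventually.of_forall fun z => ?_)
    · apply Measurable.aestronglyMeasurable
      have hm := measurable_gaussianPDFReal 0 1
      simp only [Function.uncurry_def]
      exact (hm.comp measurable_fst).mul
        ((measurable_fst.abs).mul (hm.comp ((measurable_fst.abs).mul measurable_snd)))
    · simp only [Function.uncurry, gpdf, mul_one]
      have hle1 : (√(2*Real.pi))⁻¹ ≤ 1 := by
        apply inv_le_one_of_one_le₀
        rw [Real.one_le_sqrt]
        linarith [Real.pi_gt_three]
      have h0 : 0 ≤ (√(2*Real.pi))⁻¹ := by positivity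
      rw [Real.norm_of_nonneg (by positivity), abs_mul, abs_of_pos (Real.exp_pos _)]
      have he : Real.exp (-((|z.1| * z.2)^2/2)) ≤ 1 := by
        rw [Real.exp_le_one_iff]; have := sq_nonneg (|z.1| * z.2); linarith
      have e1 : -(1/2) * z.1^2 = -(z.1^2/2) := by ring
      rw [e1]
      calc _ ≤ 1 * Real.exp (-(z.1^2/2)) * (|z.1| * (1 * 1)) := by gcongr
        _ = _ := by ring

/-- law of a row of weights -/
def rowM (n : ℕ) : Measure (Fin n → ℝ) := Measure.pi fun _ => gaussianReal 0 1

instance (n : ℕ) : IsProbabilityMeasure (rowM n) := by unfold rowM; infer_instance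

lemma chi_sq (b : Bool) : chi b ^ 2 = 1 := by cases b <;> simp [chi]

lemma row_indep (n : ℕ) (x : Fin n → Bool) :
    iIndepFun (fun (j : Fin n) (v : Fin n → ℝ) => v j * chi (x j)) (rowM n) :=
  iIndepFun_pi (X := fun j (t : ℝ) => t * chi (x j)) (fun j => by fun_prop)

lemma row_coord (n : ℕ) (x : Fin n → Bool) (j : Fin n) :
    (rowM n).map (fun v => v j * chi (x j)) = gaussianReal 0 1 := by
  have h1 : (rowM n).map (fun v => v j) = gaussianReal 0 1 :=
    (measurePreserving_eval (fun _ : Fin n => gaussianReal 0 1) j).map_eq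
  have h2 := gaussianReal_map_mul_const (μ := 0) (v := 1) (chi (x j))
  rw [← h1, Measure.map_map (by fun_prop) (by fun_prop)] at h2
  have h3 : NNReal.mk (chi (x j)^2) (sq_nonneg _) = 1 := by ext; simp [chi_sq]
  rw [h3, mul_one, mul_zero] at h2
  exact h2

lemma row_sum (n : ℕ) (x : Fin n → Bool) (S : Finset (Fin n)) :
    (rowM n).map (∑ j ∈ S, fun v : Fin n → ℝ => v j * chi (x j)) = gaussianReal 0 S.card := by
  classical
  induction S using Finset.induction_on with
  | empty =>
    simp only [Finset.sum_empty, Finset.card_empty, Nat.cast_zero, gaussianReal_zero_var]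
    have : (0 : (Fin n → ℝ) → ℝ) = fun _ => 0 := rfl
    rw [this, Measure.map_const]; simp
  | insert a s ha ih =>
    rw [Finset.sum_insert ha, add_comm, Finset.card_insert_of_notMem ha]
    have := gaussianReal_add_gaussianReal_of_indepFun
      ((row_indep n x).indepFun_finsetSum_of_notMem (fun j => by fun_prop) ha) ih (row_coord n x a)
    rw [this]; simp

/-- sign of the preactivation -/
def rowSign (n : ℕ) (x : Fin n → Bool) (v : Fin n → ℝ) : Bool := decide (0 < ∑ j, v j * chi (x j))

lemma row_ne_zero (n : ℕ) (hn : 0 < n) (x : Fin n → Bool) :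
    ∀ᵐ v ∂(rowM n), ∑ j, v j * chi (x j) ≠ 0 := by
  have h := row_sum n x univ
  have hne : ((univ : Finset (Fin n)).card : NNReal) ≠ 0 := by simp; omega
  have : NullSingletonClass (gaussianReal 0 ((univ : Finset (Fin n)).card : NNReal)) :=
    nullSingletonClass_gaussianReal hne
  have h0 : gaussianReal 0 ((univ : Finset (Fin n)).card : NNReal) {0} = 0 := measure_singleton 0
  rw [← h, Measure.map_apply (by fun_prop) (measurableSet_singleton 0)] at h0
  rw [ae_iff]
  convert h0 using 2
  ext v; simp

lemma rowSign_meas (n : ℕ) (x : Fin n → Bool) : Measurable (rowSign n x) := by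
  unfold rowSign
  apply measurable_to_bool
  have : (fun v : Fin n → ℝ => decide (0 < ∑ j, v j * chi (x j))) ⁻¹' {true}
    = {v | 0 < ∑ j, v j * chi (x j)} := by ext; simp
  rw [this]
  exact measurableSet_lt (by fun_prop) (by fun_prop)

/-- disagreement probability after one layer -/
def pp (n : ℕ) (x y : Fin n → Bool) : ℝ := (rowM n).real {v | rowSign n x v ≠ rowSign n y v}

lemma pp_nonneg (n : ℕ) (x y : Fin n → Bool) : 0 ≤ pp n x y := measureReal_nonneg
lemma pp_le_one (n : ℕ) (x y : Fin n → Bool) : pp n x y ≤ 1 := measureReal_le_one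
lemma pp_self (n : ℕ) (x : Fin n → Bool) : pp n x x = 0 := by simp [pp]

lemma rowM_neg (n : ℕ) : MeasurePreserving (fun v : Fin n → ℝ => -v) (rowM n) (rowM n) := by
  have := measurePreserving_pi (μ := fun _ : Fin n => gaussianReal 0 1)
    (ν := fun _ : Fin n => gaussianReal 0 1) (f := fun _ (t : ℝ) => -t)
    (fun _ => ⟨by fun_prop, by simpa using gaussianReal_map_neg (μ := 0) (v := 1)⟩)
  exact this

/-- The joint event for a single row. -/
def rowEv (n : ℕ) (x y : Fin n → Bool) (a b : Bool) : Set (Fin n → ℝ) :=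
  {v | rowSign n x v = a ∧ rowSign n y v = b}

lemma rowEv_meas (n : ℕ) (x y : Fin n → Bool) (a b : Bool) : MeasurableSet (rowEv n x y a b) :=
  ((rowSign_meas n x) (measurableSet_singleton a)).inter
    ((rowSign_meas n y) (measurableSet_singleton b))

lemma rowEv_flip (n : ℕ) (hn : 0 < n) (x y : Fin n → Bool) (a b : Bool) :
    (rowM n).real (rowEv n x y a b) = (rowM n).real (rowEv n x y (!a) (!b)) := by
  have h1 := (rowM_neg n).measureReal_preimage (rowEv_meas n x y a b).nullMeasurableSet
  rw [← h1]
  apply measureReal_congr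
  filter_upwards [row_ne_zero n hn x, row_ne_zero n hn y] with v hx hy
  have key : ∀ z : Fin n → Bool, ∑ j, v j * chi (z j) ≠ 0 → rowSign n z (-v) = !(rowSign n z v) := by
    intro z hz
    unfold rowSign
    have : ∑ j, (-v) j * chi (z j) = - ∑ j, v j * chi (z j) := by
      simp [Finset.sum_neg_distrib]
    rw [this]
    rcases lt_or_gt_of_ne hz with h | h
    · simp [h, h.le]
    · simp [h, h.le]
  apply propext
  show (rowSign n x (-v) = a ∧ rowSign n y (-v) = b) ↔ (rowSign n x v = !a ∧ rowSign n y v = !b)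
  rw [key x hx, key y hy]
  cases rowSign n x v <;> cases rowSign n y v <;> cases a <;> cases b <;> simp

lemma row_law (n : ℕ) (hn : 0 < n) (x y : Fin n → Bool) (a b : Bool) :
    (rowM n).real (rowEv n x y a b) = (1/2) * (if a = b then 1 - pp n x y else pp n x y) := by
  have f1 := rowEv_flip n hn x y true true
  have f2 := rowEv_flip n hn x y true false
  simp only [Bool.not_true, Bool.not_false] at f1 f2
  have hpp : pp n x y = (rowM n).real (rowEv n x y true false)
      + (rowM n).real (rowEv n x y false true) := by
    rw [← measureReal_union _ (rowEv_meas n x y false true)]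
    · unfold pp; congr 1; ext v
      simp only [rowEv, Set.mem_ofPred_eq, Set.mem_union]
      cases rowSign n x v <;> cases rowSign n y v <;> simp
    · rw [Set.disjoint_left]; rintro v ⟨h1, _⟩ ⟨h2, _⟩; simp_all
  have hqq : 1 - pp n x y = (rowM n).real (rowEv n x y true true)
      + (rowM n).real (rowEv n x y false false) := by
    rw [← measureReal_union _ (rowEv_meas n x y false false)]
    · have hm : MeasurableSet {v | rowSign n x v ≠ rowSign n y v} :=
        (measurableSet_eq_fun (rowSign_meas n x) (rowSign_meas n y)).compl
      unfold pp
      rw [← probReal_compl_eq_one_sub hm]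
      congr 1; ext v
      simp only [rowEv, Set.mem_ofPred_eq, Set.mem_union, Set.mem_compl_iff]
      cases rowSign n x v <;> cases rowSign n y v <;> simp
    · rw [Set.disjoint_left]; rintro v ⟨h1, _⟩ ⟨h2, _⟩; simp_all
  rw [hqq, hpp]
  cases a <;> cases b <;> simp <;> linarith

lemma pp_formula (n : ℕ) (x y : Fin n → Bool) (h0 : 0 < hammingDist x y) (h1 : hammingDist x y < n) :
    ∃ ψ : ℝ, 0 < ψ ∧ ψ < Real.pi/2 ∧ pp n x y = 2*ψ/Real.pi ∧
      Real.sin ψ ^ 2 = (hammingDist x y : ℝ) / n := by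
  set d := hammingDist x y with hd
  have hn : 0 < n := by omega
  set S : Finset (Fin n) := univ.filter fun i => x i ≠ y i with hS
  set R : Finset (Fin n) := univ.filter fun i => x i = y i with hR
  have hSc : S.card = d := rfl
  have hRc : R.card = n - d := by
    have : R.card + S.card = n := by
      rw [hS, hR, Finset.card_filter_add_card_filter_not]; simp
    omega
  have hdisj : Disjoint R S := Finset.disjoint_filter_filter_not _ _ _
  set f : Fin n → (Fin n → ℝ) → ℝ := fun j v => v j * chi (x j) with hf
  set A : (Fin n → ℝ) → ℝ := ∑ j ∈ R, f j with hA
  set B : (Fin n → ℝ) → ℝ := ∑ j ∈ S, f j with hB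
  have mA : Measurable A := by rw [hA]; fun_prop
  have mB : Measurable B := by rw [hB]; fun_prop
  have hind : IndepFun A B (rowM n) := by
    have h := (row_indep n x).indepFun_finset R S hdisj (fun j => by fun_prop)
    have h2 := h.comp (φ := fun w : R → ℝ => ∑ j, w j) (ψ := fun w : S → ℝ => ∑ j, w j)
      (by fun_prop) (by fun_prop)
    convert h2 using 1
    · ext v; simp only [hA, hf, Finset.sum_apply, Function.comp]
      exact (Finset.sum_coe_sort R (fun j => v j * chi (x j))).symm
    · ext v; simp only [hB, hf, Finset.sum_apply, Function.comp]
      exact (Finset.sum_coe_sort S (fun j => v j * chi (x j))).symm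
  set a : ℝ := √((n-d : ℕ) : ℝ) with ha
  set b : ℝ := √(d : ℝ) with hb
  have ha0 : 0 < a := Real.sqrt_pos.mpr (by exact_mod_cast (by omega : 0 < n - d))
  have hb0 : 0 < b := Real.sqrt_pos.mpr (by exact_mod_cast h0)
  have ha2 : a^2 = ((n-d:ℕ):ℝ) := Real.sq_sqrt (by positivity)
  have hb2 : b^2 = (d:ℝ) := Real.sq_sqrt (by positivity)
  have std : ∀ (k : ℕ), gaussianReal 0 (k : NNReal) = (gaussianReal 0 1).map (fun t => √(k:ℝ) * t) := by
    intro k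
    rw [gaussianReal_map_const_mul]
    congr 1
    · simp
    · ext; simp
  have hmap : (rowM n).map (fun v => (A v, B v))
      = ((gaussianReal 0 1).prod (gaussianReal 0 1)).map (Prod.map (fun t => a * t) (fun t => b * t)) := by
    rw [(indepFun_iff_map_prod_eq_prod_map_map mA.aemeasurable mB.aemeasurable).mp hind]
    rw [hA, hB, row_sum n x R, row_sum n x S, hRc, hSc, std, std,
      Measure.map_prod_map _ _ (by fun_prop) (by fun_prop)]
  have hx : ∀ v, ∑ j, v j * chi (x j) = A v + B v := by
    intro v
    simp only [hA, hB, hf, Finset.sum_apply]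
    rw [hR, hS, Finset.sum_filter_add_sum_filter_not]
  have hy : ∀ v, ∑ j, v j * chi (y j) = A v - B v := by
    intro v
    simp only [hA, hB, hf, Finset.sum_apply]
    rw [← Finset.sum_filter_add_sum_filter_not univ (fun i => x i = y i), sub_eq_add_neg,
      ← Finset.sum_neg_distrib]
    congr 1
    · refine Finset.sum_congr rfl fun j hj => ?_
      rw [(Finset.mem_filter.mp hj).2]
    · refine Finset.sum_congr rfl fun j hj => ?_
      have := (Finset.mem_filter.mp hj).2
      cases hxj : x j <;> cases hyj : y j <;> simp_all [chi]
  have hpp : pp n x y = (rowM n).real ((fun v => (A v, B v)) ⁻¹' {z : ℝ × ℝ | |z.1| < |z.2|}) := by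
    unfold pp
    apply measureReal_congr
    filter_upwards [row_ne_zero n hn x, row_ne_zero n hn y] with v h1 h2
    apply propext
    show rowSign n x v ≠ rowSign n y v ↔ |A v| < |B v|
    unfold rowSign
    rw [hx] at h1 ⊢
    rw [hy] at h2 ⊢
    rw [← sq_lt_sq]
    rcases lt_or_gt_of_ne h1 with k1 | k1 <;> rcases lt_or_gt_of_ne h2 with k2 | k2
    · have hp := mul_pos_of_neg_of_neg k1 k2
      rw [decide_eq_false (not_lt.mpr k1.le), decide_eq_false (not_lt.mpr k2.le)]
      simp only [ne_eq, not_true_eq_false, false_iff, not_lt]; nlinarith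
    · have hp := mul_neg_of_neg_of_pos k1 k2
      rw [decide_eq_false (not_lt.mpr k1.le), decide_eq_true k2]
      simp only [ne_eq, Bool.false_eq_true, not_false_eq_true, true_iff]; nlinarith
    · have hp := mul_neg_of_pos_of_neg k1 k2
      rw [decide_eq_true k1, decide_eq_false (not_lt.mpr k2.le)]
      simp only [ne_eq, Bool.true_eq_false, not_false_eq_true, true_iff]; nlinarith
    · have hp := mul_pos k1 k2
      rw [decide_eq_true k1, decide_eq_true k2]
      simp only [ne_eq, not_true_eq_false, false_iff, not_lt]; nlinarith
  have hms : MeasurableSet {z : ℝ × ℝ | |z.1| < |z.2|} := measurableSet_lt (by fun_prop) (by fun_prop)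
  have hpp2 : pp n x y = 2 * Real.arctan (b/a) / Real.pi := by
    rw [hpp, ← map_measureReal_apply (by fun_prop) hms, hmap,
      map_measureReal_apply (by fun_prop) hms, ← orthant (b/a) (by positivity)]
    conv_lhs => rw [← Measure.prod_swap]
    rw [map_measureReal_apply measurable_swap (measurableSet_preimage (by fun_prop) hms)]
    congr 1
    ext z
    show |a * z.2| < |b * z.1| ↔ |z.2| < b / a * |z.1|
    rw [abs_mul, abs_mul, abs_of_pos ha0, abs_of_pos hb0, div_mul_eq_mul_div, lt_div_iff₀ ha0,
      mul_comm a]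
  refine ⟨Real.arctan (b/a), Real.arctan_pos.mpr (by positivity), Real.arctan_lt_pi_div_two _,
    hpp2, ?_⟩
  rw [Real.sin_arctan, div_pow, Real.sq_sqrt (by positivity), div_pow, ha2, hb2]
  have e : ((n-d:ℕ):ℝ) = n - d := by push_cast [h1.le]; ring
  have hnd : (0:ℝ) < n - d := by rw [← e]; exact_mod_cast (by omega : 0 < n - d)
  rw [e]
  have hn' : (0:ℝ) < n := by exact_mod_cast hn
  field_simp
  ring

/-- law of a layer of weights -/
def matM (n : ℕ) : Measure (Fin n → Fin n → ℝ) := Measure.pi fun _ => rowM n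

instance (n : ℕ) : IsProbabilityMeasure (matM n) := by unfold matM; infer_instance

lemma weightMeas_eq (n T : ℕ) : weightMeas n T = Measure.pi fun _ : Fin T => matM n := rfl

instance (n T : ℕ) : IsProbabilityMeasure (weightMeas n T) := by
  rw [weightMeas_eq]; infer_instance

/-- Boolean layer map -/
def lay (n : ℕ) (θ : Fin n → Fin n → ℝ) (x : Fin n → Bool) : Fin n → Bool :=
  fun i => rowSign n x (θ i)

/-- Boolean network -/
def bnet (n T : ℕ) (Θ : Fin T → Fin n → Fin n → ℝ) (x : Fin n → Bool) : Fin n → Bool :=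
  (List.ofFn Θ).foldl (fun y θ => lay n θ y) x

lemma layerMap_chi (n : ℕ) (θ : Fin n → Fin n → ℝ) (x : Fin n → Bool) :
    layerMap n θ (fun j => chi (x j)) = fun j => chi (lay n θ x j) := by
  funext i
  simp [layerMap, lay, rowSign, sgn, chi]

lemma foldl_chi (n : ℕ) (L : List (Fin n → Fin n → ℝ)) : ∀ (x : Fin n → Bool),
    L.foldl (fun y θ => layerMap n θ y) (fun j => chi (x j))
      = fun j => chi (L.foldl (fun y θ => lay n θ y) x j) := by
  induction L with
  | nil => intro x; rfl
  | cons a L ih => intro x; simp only [List.foldl_cons]; rw [layerMap_chi, ih]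

lemma boolOut_eq (n T : ℕ) (h : (Fin n → Bool) → Bool) (Θ : Fin T → Fin n → Fin n → ℝ)
    (ω : Fin n → Bool) : boolOut n T h Θ ω = h (bnet n T Θ ω) := by
  unfold boolOut network bnet
  rw [foldl_chi]
  congr 1
  funext i
  have : ∀ b : Bool, decide (0 < chi b) = b := by intro b; cases b <;> simp [chi]
  exact this _

lemma bnet_zero (n : ℕ) (Θ : Fin 0 → Fin n → Fin n → ℝ) (x : Fin n → Bool) :
    bnet n 0 Θ x = x := by simp [bnet]

lemma bnet_first (n T : ℕ) (Θ : Fin (T+1) → Fin n → Fin n → ℝ) (x : Fin n → Bool) :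
    bnet n (T+1) Θ x = bnet n T (fun j => Θ ((0 : Fin (T+1)).succAbove j)) (lay n (Θ 0) x) := by
  simp [bnet, List.ofFn_succ]

lemma bnet_last (n T : ℕ) (Θ : Fin (T+1) → Fin n → Fin n → ℝ) (x : Fin n → Bool) :
    bnet n (T+1) Θ x
      = lay n (Θ (Fin.last T)) (bnet n T (fun j => Θ ((Fin.last T).succAbove j)) x) := by
  unfold bnet
  rw [List.ofFn_succ_last, List.foldl_append]
  simp

lemma lay_meas (n : ℕ) (x : Fin n → Bool) : Measurable (fun θ => lay n θ x) := by
  apply measurable_pi_lambda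
  intro i
  exact (rowSign_meas n x).comp (measurable_pi_apply i)

lemma lay_meas2 (n : ℕ) :
    Measurable (fun z : (Fin n → Fin n → ℝ) × (Fin n → Bool) => lay n z.1 z.2) :=
  measurable_from_prod_countable_left (fun x => lay_meas n x)

lemma bnet_meas (n T : ℕ) : ∀ x : Fin n → Bool, Measurable (fun Θ => bnet n T Θ x) := by
  induction T with
  | zero => intro x; simp only [bnet_zero]; exact measurable_const
  | succ T ih =>
    intro x
    simp only [bnet_last]
    have h1 : Measurable (fun Θ : Fin (T+1) → Fin n → Fin n → ℝ =>
        fun j => Θ ((Fin.last T).succAbove j)) :=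
      measurable_pi_lambda _ fun j => measurable_pi_apply _
    have h2 : Measurable (fun Θ : Fin (T+1) → Fin n → Fin n → ℝ => Θ (Fin.last T)) :=
      measurable_pi_apply _
    exact (lay_meas2 n).comp (h2.prodMk ((ih x).comp h1))

lemma bnet_meas2 (n T : ℕ) :
    Measurable (fun z : (Fin T → Fin n → Fin n → ℝ) × (Fin n → Bool) => bnet n T z.1 z.2) :=
  measurable_from_prod_countable_left (fun x => bnet_meas n T x)

lemma bdd_int {α β : Type*} [MeasurableSpace α] [MeasurableSpace β] [Finite β]
    [MeasurableSingletonClass β] (μ : Measure α) [IsProbabilityMeasure μ] (Z : α → β)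
    (hZ : Measurable Z) (G : β → ℝ) : Integrable (fun a => G (Z a)) μ := by
  cases nonempty_fintype β
  refine Integrable.of_bound (C := ∑ b, |G b|) ?_ ?_
  · exact ((measurable_of_finite G).comp hZ).aestronglyMeasurable
  · refine Filter.Eventually.of_forall fun a => ?_
    rw [Real.norm_eq_abs]
    exact Finset.single_le_sum (f := fun b => |G b|) (fun _ _ => abs_nonneg _) (Finset.mem_univ (Z a))

lemma split_int (n T : ℕ) (i : Fin (T+1))
    (Ψ : (Fin n → Fin n → ℝ) × (Fin T → Fin n → Fin n → ℝ) → ℝ)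
    (hI : Integrable Ψ ((matM n).prod (weightMeas n T))) :
    ∫ Θ, Ψ (Θ i, fun j => Θ (i.succAbove j)) ∂weightMeas n (T+1)
      = ∫ θ, ∫ Θ', Ψ (θ, Θ') ∂weightMeas n T ∂matM n := by
  rw [← integral_prod _ hI]
  have := measurePreserving_piFinSuccAbove (fun _ : Fin (T+1) => matM n) i
  exact this.integral_comp' (g := Ψ)

lemma split_first (n T : ℕ) (F : (Fin n → Bool) → (Fin n → Bool) → ℝ) (x y : Fin n → Bool) :
    ∫ Θ, F (bnet n (T+1) Θ x) (bnet n (T+1) Θ y) ∂weightMeas n (T+1)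
      = ∫ θ, ∫ Θ', F (bnet n T Θ' (lay n θ x)) (bnet n T Θ' (lay n θ y)) ∂weightMeas n T ∂matM n := by
  simp only [bnet_first]
  refine split_int n T 0 (fun z => F (bnet n T z.2 (lay n z.1 x)) (bnet n T z.2 (lay n z.1 y))) ?_
  refine bdd_int _ (fun z : (Fin n → Fin n → ℝ) × (Fin T → Fin n → Fin n → ℝ) =>
    ((bnet n T z.2 (lay n z.1 x)), (bnet n T z.2 (lay n z.1 y)))) ?_
    (fun w : (Fin n → Bool) × (Fin n → Bool) => F w.1 w.2)
  refine Measurable.prodMk ?_ ?_ <;>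
  exact (bnet_meas2 n T).comp (measurable_snd.prodMk ((lay_meas n _).comp measurable_fst))

lemma split_last (n T : ℕ) (Φ : ((Fin n → Bool) → (Fin n → Bool)) → ℝ) :
    ∫ Θ, Φ (bnet n (T+1) Θ) ∂weightMeas n (T+1)
      = ∫ θ, ∫ Θ', Φ (fun x => lay n θ (bnet n T Θ' x)) ∂weightMeas n T ∂matM n := by
  have : ∀ Θ, bnet n (T+1) Θ = fun x => lay n (Θ (Fin.last T))
    (bnet n T (fun j => Θ ((Fin.last T).succAbove j)) x) := fun Θ => funext (bnet_last n T Θ)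
  simp only [this]
  refine split_int n T (Fin.last T) (fun z => Φ (fun x => lay n z.1 (bnet n T z.2 x))) ?_
  refine bdd_int _ (fun z : (Fin n → Fin n → ℝ) × (Fin T → Fin n → Fin n → ℝ) =>
    (fun x => lay n z.1 (bnet n T z.2 x))) ?_ Φ
  refine measurable_pi_lambda _ fun x => ?_
  exact (lay_meas2 n).comp (measurable_fst.prodMk ((bnet_meas n T x).comp measurable_snd))

lemma one_layer (n : ℕ) (hn : 0 < n) (F : (Fin n → Bool) → (Fin n → Bool) → ℝ) (x y : Fin n → Bool) :
    ∫ θ, F (lay n θ x) (lay n θ y) ∂matM n = pairMean n (pp n x y) F := by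
  have hm : Measurable (fun θ => (lay n θ x, lay n θ y)) := (lay_meas n x).prodMk (lay_meas n y)
  have h1 : ∫ θ, F (lay n θ x) (lay n θ y) ∂matM n
      = ∫ w, F w.1 w.2 ∂((matM n).map (fun θ => (lay n θ x, lay n θ y))) := by
    rw [integral_map hm.aemeasurable]
    exact (measurable_of_finite _).aestronglyMeasurable
  have : IsProbabilityMeasure ((matM n).map (fun θ => (lay n θ x, lay n θ y))) :=
    Measure.isProbabilityMeasure_map hm.aemeasurable
  rw [h1, integral_fintype (Integrable.of_finite), Fintype.sum_prod_type]
  unfold pairMean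
  refine Finset.sum_congr rfl fun ω _ => Finset.sum_congr rfl fun η _ => ?_
  rw [smul_eq_mul]
  congr 1
  rw [map_measureReal_apply hm (measurableSet_singleton _)]
  have hs : (fun θ => (lay n θ x, lay n θ y)) ⁻¹' {(ω, η)}
      = Set.univ.pi fun i => rowEv n x y (ω i) (η i) := by
    ext θ
    simp only [Set.mem_preimage, Set.mem_singleton_iff, Prod.mk.injEq, Set.mem_pi, Set.mem_univ,
      true_imp_iff, funext_iff]
    exact forall_and.symm
  rw [hs, Measure.real, matM, Measure.pi_pi, ENNReal.toReal_prod]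
  have : ∀ i, ((rowM n) (rowEv n x y (ω i) (η i))).toReal
    = (1/2) * (if ω i = η i then 1 - pp n x y else pp n x y) := fun i => row_law n hn x y _ _
  simp only [this]
  rw [Finset.prod_mul_distrib, pairWeight]
  simp

/-- two-point expectation -/
def EE (n T : ℕ) (F : (Fin n → Bool) → (Fin n → Bool) → ℝ) (x y : Fin n → Bool) : ℝ :=
  ∫ Θ, F (bnet n T Θ x) (bnet n T Θ y) ∂weightMeas n T

lemma EE_int (n T : ℕ) (F : (Fin n → Bool) → (Fin n → Bool) → ℝ) (x y : Fin n → Bool) :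
    Integrable (fun Θ => F (bnet n T Θ x) (bnet n T Θ y)) (weightMeas n T) :=
  bdd_int _ (fun Θ => (bnet n T Θ x, bnet n T Θ y)) ((bnet_meas n T x).prodMk (bnet_meas n T y))
    (fun w : (Fin n → Bool) × (Fin n → Bool) => F w.1 w.2)

lemma bnet_int (n T : ℕ) (Φ : ((Fin n → Bool) → (Fin n → Bool)) → ℝ) :
    Integrable (fun Θ => Φ (bnet n T Θ)) (weightMeas n T) :=
  bdd_int _ (fun Θ => bnet n T Θ) (measurable_pi_lambda _ fun x => bnet_meas n T x) Φ

lemma EE_zero (n : ℕ) (F : (Fin n → Bool) → (Fin n → Bool) → ℝ) (x y : Fin n → Bool) :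
    EE n 0 F x y = F x y := by
  simp [EE, bnet_zero]

lemma EE_first (n : ℕ) (hn : 0 < n) (T : ℕ) (F : (Fin n → Bool) → (Fin n → Bool) → ℝ)
    (x y : Fin n → Bool) :
    EE n (T+1) F x y = pairMean n (pp n x y) (EE n T F) := by
  rw [EE, split_first, ← one_layer n hn]
  rfl

lemma EE_last (n : ℕ) (hn : 0 < n) (T : ℕ) (F : (Fin n → Bool) → (Fin n → Bool) → ℝ) :
    EE n (T+1) F = EE n T (fun x y => pairMean n (pp n x y) F) := by
  induction T with
  | zero =>
    funext x y
    rw [EE_first n hn, EE_zero]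
    congr 1
    funext x y
    exact EE_zero n F x y
  | succ T ih =>
    funext x y
    rw [EE_first n hn, ih, EE_first n hn]

lemma EE_mono (n T : ℕ) (F G : (Fin n → Bool) → (Fin n → Bool) → ℝ) (h : ∀ x y, F x y ≤ G x y)
    (x y : Fin n → Bool) : EE n T F x y ≤ EE n T G x y :=
  integral_mono (EE_int n T F x y) (EE_int n T G x y) (fun _ => h _ _)

lemma EE_affine (n T : ℕ) (c k : ℝ) (F : (Fin n → Bool) → (Fin n → Bool) → ℝ)
    (x y : Fin n → Bool) : EE n T (fun x y => c + k * F x y) x y = c + k * EE n T F x y := by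
  unfold EE
  rw [integral_add (integrable_const _) ((EE_int n T F x y).const_mul k), integral_const_mul]
  simp

/-- squared correlation -/
def F0 (n : ℕ) (x y : Fin n → Bool) : ℝ := (1 - 2 * pp n x y)^2

lemma F0_le (n : ℕ) (x y : Fin n → Bool) : F0 n x y ≤ 1 := by
  unfold F0
  nlinarith [pp_nonneg n x y, pp_le_one n x y]

lemma bd_nonneg (n k : ℕ) : 0 ≤ bd n k := by
  unfold bd; positivity

lemma EE_F0 (n : ℕ) (hn : 440 ≤ n) (t : ℕ) : ∀ x y : Fin n → Bool,
    EE n t (F0 n) x y ≤ bd n (hammingDist x y) + ((21/22:ℝ)^t * lyap n (hammingDist x y)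
      + t * 24 / √n * 1) := by
  have hn0 : 0 < n := by omega
  have hle1 : ∀ t x y, EE n t (F0 n) x y ≤ 1 := by
    intro t x y
    have h := EE_mono n t (F0 n) (fun _ _ => 1) (F0_le n) x y
    refine h.trans ?_
    simp [EE]
  have hham : ∀ x y : Fin n → Bool, hammingDist x y ≤ n := fun x y => by
    simpa using hammingDist_le_card_fintype (x := x) (y := y)
  have hnR : (440:ℝ) ≤ n := by exact_mod_cast hn
  have hs : 0 < √(n:ℝ) := Real.sqrt_pos.mpr (by linarith)
  have hs2 : √(n:ℝ)^2 = n := Real.sq_sqrt (by linarith)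
  have hs1 : 1 ≤ √(n:ℝ) := by nlinarith
  have h20 : 20/(n:ℝ) ≤ 20/√n := by
    apply div_le_div_of_nonneg_left (by norm_num) hs
    nlinarith
  have h440 : 20/(n:ℝ) ≤ 1/22 := by
    rw [div_le_div_iff₀ (by linarith) (by norm_num)]; linarith
  induction t with
  | zero =>
    intro x y
    have hL := lyap_nonneg n hn0 _ (hham x y)
    by_cases hb : hammingDist x y = 0 ∨ n - hammingDist x y = 0
    · have h1 : 1 ≤ bd n (hammingDist x y) := by
        unfold bd; rcases hb with h | h
        · rw [if_pos h]; split_ifs <;> norm_num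
        · rw [if_pos h]; split_ifs <;> norm_num
      have := hle1 0 x y
      simp; linarith
    · push Not at hb
      obtain ⟨ψ, a1, a2, a3, a4⟩ := pp_formula n x y (by omega) (by omega)
      obtain ⟨b1, b2, b3, b4, b5⟩ := drift n _ (by omega) (by omega) ψ (pp n x y) a1 a2 a3 a4
      rw [EE_zero]
      have := bd_nonneg n (hammingDist x y)
      have e : F0 n x y = (1 - 2 * pp n x y)^2 := rfl
      simp; linarith
  | succ t ih =>
    intro x y
    have hL := lyap_nonneg n hn0 _ (hham x y)
    have hμ0 : (0:ℝ) ≤ (21/22:ℝ)^t := by positivity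
    have hμ1 : (21/22:ℝ)^t ≤ 1 := pow_le_one₀ (by norm_num) (by norm_num)
    by_cases hb : hammingDist x y = 0 ∨ n - hammingDist x y = 0
    · have h1 : 1 ≤ bd n (hammingDist x y) := by
        unfold bd; rcases hb with h | h
        · rw [if_pos h]; split_ifs <;> norm_num
        · rw [if_pos h]; split_ifs <;> norm_num
      have := hle1 (t+1) x y
      have : 0 ≤ (21/22:ℝ)^(t+1) * lyap n (hammingDist x y) + ((t+1:ℕ):ℝ) * 24 / √n * 1 := by positivity
      linarith
    · push Not at hb
      obtain ⟨ψ, a1, a2, a3, a4⟩ := pp_formula n x y (by omega) (by omega)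
      obtain ⟨b1, b2, b3, b4, b5⟩ := drift n _ (by omega) (by omega) ψ (pp n x y) a1 a2 a3 a4
      rw [EE_first n hn0]
      have hbd := bd_nonneg n (hammingDist x y)
      have h1 := pairMean_mono n (pp n x y) b1.le b2.le _ _ ih
      rw [pairMean_hamming n (pp n x y) (fun k => bd n k + ((21/22:ℝ)^t * lyap n k
        + t * 24 / √n * 1)), bino_add, bino_add, bino_smul, bino_smul, bino_one] at h1
      have h3 : (21/22:ℝ)^t * bino n (pp n x y) (lyap n)
          ≤ (21/22:ℝ)^t * (21/22 * lyap n (hammingDist x y) + 20/n) := by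
        refine mul_le_mul_of_nonneg_left (b3.trans ?_) hμ0
        have := mul_le_mul_of_nonneg_right h440 hL
        linarith
      have h4 : (21/22:ℝ)^t * (20/n) ≤ 20/n := mul_le_of_le_one_left (by positivity) hμ1
      have h5 : ((t+1:ℕ):ℝ) * 24 / √n * 1 = t * 24 / √n * 1 + 4 / √n + 20 / √n := by
        push_cast; ring
      have h6 : bino n (pp n x y) (fun k => bd n k) ≤ 4/√n := b4
      have h7 : bino n (pp n x y) (fun k => lyap n k) = bino n (pp n x y) (lyap n) := rfl
      rw [h5, pow_succ]
      rw [h7] at h1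
      linarith

/-- expected covariance -/
def EnC (n : ℕ) (ε : ℝ) (T : ℕ) (h : (Fin n → Bool) → Bool) : ℝ :=
  ∫ Θ, noiseCov n ε (fun ω => chi (h (bnet n T Θ ω))) ∂weightMeas n T

lemma mean_pair (n T : ℕ) (ε : ℝ) (F : (Fin n → Bool) → (Fin n → Bool) → ℝ) :
    ∫ Θ, pairMean n ε (fun ω η => F (bnet n T Θ ω) (bnet n T Θ η)) ∂weightMeas n T
      = pairMean n ε (EE n T F) := by
  unfold pairMean EE
  rw [integral_finsetSum]
  · refine Finset.sum_congr rfl fun ω _ => ?_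
    rw [integral_finsetSum]
    · refine Finset.sum_congr rfl fun η _ => ?_
      rw [integral_const_mul]
    · intro η _
      exact (EE_int n T F ω η).const_mul _
  · intro ω _
    exact integrable_finsetSum _ fun η _ => (EE_int n T F ω η).const_mul _

lemma mean_unif (n : ℕ) (hn : 0 < n) (T : ℕ) (g : (Fin n → Bool) → ℝ) :
    ∫ Θ, unifMean n (fun ω => g (bnet n (T+1) Θ ω)) ∂weightMeas n (T+1) = unifMean n g := by
  have h1 : ∀ Θ, unifMean n (fun ω => g (bnet n (T+1) Θ ω))
      = pairMean n 0 (fun ω η => (fun x _ => g x) (bnet n (T+1) Θ ω) (bnet n (T+1) Θ η)) := by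
    intro Θ; rw [pairMean_zero]
  simp only [h1]
  rw [mean_pair n (T+1) 0 (fun x _ => g x), pairMean_zero]
  have : ∀ ω, EE n (T+1) (fun x _ => g x) ω ω = unifMean n g := by
    intro ω
    rw [EE_last n hn]
    unfold EE
    simp only [pp_self, pairMean_zero]
    simp
  simp only [this, unifMean_const]

lemma EnC_base (n : ℕ) (hn : 440 ≤ n) (ε : ℝ) (hε0 : 0 < ε) (hε1 : ε ≤ 1/2) (t : ℕ) (s : ℝ)
    (hs : 0 < s) (h : (Fin n → Bool) → Bool) :
    EnC n ε (t+1) h ≤ s/2 + 1/(2*s) * (bino n ε (bd n) + ((21/22:ℝ)^t * bino n ε (lyap n)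
      + t * 24 / √n)) := by
  have hn0 : 0 < n := by omega
  set g : (Fin n → Bool) → ℝ := fun x => chi (h x) with hg
  have hg2 : ∀ ω, g ω ^ 2 = 1 := fun ω => chi_sq _
  set m := unifMean n g with hm
  have e1 : EnC n ε (t+1) h = pairMean n ε (EE n (t+1) (fun x y => g x * g y))
      - ∫ Θ, unifMean n (fun ω => g (bnet n (t+1) Θ ω))^2 ∂weightMeas n (t+1) := by
    rw [← mean_pair]
    unfold EnC noiseCov
    rw [integral_sub]
    · exact bnet_int n (t+1) (fun b => pairMean n ε (fun ω η => g (b ω) * g (b η)))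
    · exact bnet_int n (t+1) (fun b => unifMean n (fun ω => g (b ω))^2)
  have e2 : m^2 ≤ ∫ Θ, unifMean n (fun ω => g (bnet n (t+1) Θ ω))^2 ∂weightMeas n (t+1) := by
    have hI1 := bnet_int n (t+1) (fun b => unifMean n (fun ω => g (b ω))^2)
    have hI2 := bnet_int n (t+1) (fun b => unifMean n (fun ω => g (b ω)))
    have h0 : ∫ Θ, (2*m) * unifMean n (fun ω => g (bnet n (t+1) Θ ω)) - m^2 ∂weightMeas n (t+1)
        ≤ ∫ Θ, unifMean n (fun ω => g (bnet n (t+1) Θ ω))^2 ∂weightMeas n (t+1) := by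
      refine integral_mono ((hI2.const_mul _).sub (integrable_const _)) hI1 fun Θ => ?_
      simp only
      nlinarith [sq_nonneg (unifMean n (fun ω => g (bnet n (t+1) Θ ω)) - m)]
    rw [integral_sub (hI2.const_mul _) (integrable_const _), integral_const_mul,
      mean_unif n hn0 t g, ← hm] at h0
    simp at h0
    nlinarith
  have e3 : ∀ x y, pairMean n (pp n x y) (fun x y => g x * g y)
      ≤ (s/2 + m^2) + 1/(2*s) * F0 n x y := by
    intro x y
    have h1 := noiseCov_le n (pp n x y) (pp_nonneg n x y) (pp_le_one n x y) g hg2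
    unfold noiseCov at h1
    have h2 : |1 - 2 * pp n x y| ≤ s/2 + 1/(2*s) * F0 n x y := by
      have : F0 n x y = |1 - 2 * pp n x y|^2 := by rw [sq_abs]; rfl
      rw [this]
      set r := |1 - 2 * pp n x y|
      have : s/2 + 1/(2*s) * r^2 - r = (s - r)^2/(2*s) := by field_simp; ring
      have : 0 ≤ (s - r)^2/(2*s) := by positivity
      linarith
    linarith
  have e4 : ∀ x y, EE n (t+1) (fun x y => g x * g y) x y
      ≤ (s/2 + m^2) + 1/(2*s) * (bd n (hammingDist x y) + ((21/22:ℝ)^t * lyap n (hammingDist x y)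
      + t * 24 / √n * 1)) := by
    intro x y
    rw [EE_last n hn0]
    refine (EE_mono n t _ _ e3 x y).trans ?_
    rw [EE_affine]
    have := EE_F0 n hn t x y
    gcongr
  have e5 := pairMean_mono n ε hε0.le (by linarith) _ _ e4
  rw [pairMean_add, pairMean_const, pairMean_smul, pairMean_hamming n ε (fun k => bd n k +
    ((21/22:ℝ)^t * lyap n k + t * 24 / √n * 1)), bino_add, bino_add, bino_smul, bino_smul,
    bino_one, mul_one] at e5
  have h6 : bino n ε (fun k => bd n k) = bino n ε (bd n) := rfl
  have h7 : bino n ε (fun k => lyap n k) = bino n ε (lyap n) := rfl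
  rw [h6, h7] at e5
  rw [e1]
  linarith

lemma EnC_ext (n : ℕ) (ε : ℝ) (hε1 : ε ≤ 1/2) (T : ℕ) (B : ℝ)
    (hB : ∀ h, EnC n ε T h ≤ B) (m : ℕ) : ∀ h, EnC n ε (T+m) h ≤ B := by
  induction m with
  | zero => exact hB
  | succ m ih =>
    intro h
    unfold EnC
    rw [← add_assoc, split_last n (T+m) (fun b => noiseCov n ε (fun ω => chi (h (b ω))))]
    have : ∫ _θ, B ∂matM n = B := by simp
    rw [← this]
    refine integral_mono_of_nonneg (Filter.Eventually.of_forall fun θ => ?_) (integrable_const _)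
      (Filter.Eventually.of_forall fun θ => ?_)
    · exact integral_nonneg fun Θ => noiseCov_nonneg n ε hε1 _
    · exact ih (fun z => h (lay n θ z))

lemma quenched_of (n T : ℕ) (ε : ℝ) (hε1 : ε ≤ 1/2) (h : (Fin n → Bool) → Bool) (δ : ℝ)
    (hδ : 0 < δ) (hE : EnC n ε T h ≤ δ^2) :
    ENNReal.ofReal (1 - δ) ≤ weightMeas n T {Θ | noiseCov n ε (netOut n T h Θ) ≤ δ} := by
  have e : ∀ Θ, netOut n T h Θ = fun ω => chi (h (bnet n T Θ ω)) := by
    intro Θ; funext ω; rw [netOut, boolOut_eq]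
  simp only [e]
  set f : (Fin T → Fin n → Fin n → ℝ) → ℝ := fun Θ => noiseCov n ε (fun ω => chi (h (bnet n T Θ ω))) with hf
  have hI : Integrable f (weightMeas n T) :=
    bnet_int n T (fun b => noiseCov n ε (fun ω => chi (h (b ω))))
  have hmeas : Measurable f :=
    (measurable_of_finite (fun b : (Fin n → Bool) → (Fin n → Bool) =>
      noiseCov n ε (fun ω => chi (h (b ω))))).comp
      (measurable_pi_lambda _ fun x => bnet_meas n T x)
  have hM := mul_meas_ge_le_integral_of_nonneg (μ := weightMeas n T)
    (Filter.Eventually.of_forall fun Θ => noiseCov_nonneg n ε hε1 _) hI δ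
  have hM2 : (weightMeas n T).real {Θ | δ ≤ f Θ} ≤ δ := by
    have : δ * (weightMeas n T).real {Θ | δ ≤ f Θ} ≤ δ * δ := by
      refine hM.trans ?_
      rw [← sq]; exact hE
    exact le_of_mul_le_mul_left this hδ
  have hms : MeasurableSet {Θ | f Θ ≤ δ} := measurableSet_le hmeas measurable_const
  have hc : (weightMeas n T).real ({Θ | f Θ ≤ δ}ᶜ) ≤ δ := by
    refine (measureReal_mono ?_).trans hM2
    intro Θ hΘ
    have hΘ2 : ¬ (f Θ ≤ δ) := hΘ
    exact (not_le.mp hΘ2).le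
  rw [probReal_compl_eq_one_sub hms] at hc
  rw [← ofReal_measureReal]
  exact ENNReal.ofReal_le_ofReal (by linarith)

lemma final_bound (n : ℕ) (hn : 440 ≤ n) (ε : ℝ) (hε0 : 0 < ε) (hε1 : ε ≤ 1/2) (hnε : 1 ≤ n * ε)
    (t : ℕ) (A δ : ℝ) (hδ : 0 < δ) (ht1 : (21/22:ℝ)^t ≤ ε^2) (ht2 : (t:ℝ) ≤ A * Real.log n + 1)
    (hR : 2 / (n*ε) + 4 * ε + (A * Real.log n + 1) * 24 / √n ≤ δ^4)
    (m : ℕ) (h : (Fin n → Bool) → Bool) : EnC n ε (t+1+m) h ≤ δ^2 := by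
  refine EnC_ext n ε hε1 (t+1) _ (fun h => ?_) m h
  refine (EnC_base n hn ε hε0 hε1 t (δ^2) (by positivity) h).trans ?_
  have hnR : (0:ℝ) < n := by exact_mod_cast (by omega : 0 < n)
  have hb := bino_bd n (by omega) ε hε0 (by linarith)
  have hl := bino_lyap n (by omega) ε hε0 (by linarith)
  have i1 : 1/(1-ε) ≤ 1/ε := one_div_le_one_div_of_le hε0 (by linarith)
  have i2 : 1/(n*(1-ε)) ≤ 1/(n*ε) := by
    apply one_div_le_one_div_of_le (by positivity); gcongr; linarith
  have i3 : 3/(n*ε^2) ≤ 3/ε := by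
    apply div_le_div_of_nonneg_left (by norm_num) hε0; nlinarith
  have i4 : 3/(n*(1-ε)^2) ≤ 3/ε := by
    refine le_trans ?_ i3
    apply div_le_div_of_nonneg_left (by norm_num) (by positivity); gcongr; linarith
  have i5 : 1/(n*ε) ≤ 1 := by rw [div_le_one (by positivity)]; exact hnε
  have i6 : 1 ≤ 1/ε := by rw [le_div_iff₀ hε0]; linarith
  have i7 : 3/ε = 3*(1/ε) := by ring
  have hl2 : bino n ε (lyap n) ≤ 4 * (1/ε) := by linarith
  have hl3 : (21/22:ℝ)^t * bino n ε (lyap n) ≤ 4*ε := by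
    calc _ ≤ (21/22:ℝ)^t * (4 * (1/ε)) := by gcongr
      _ ≤ ε^2 * (4 * (1/ε)) := by gcongr
      _ = 4*ε := by field_simp
  have hb2 : bino n ε (bd n) ≤ 2/(n*ε) := by
    have : 2/(n*ε) = 1/(n*ε) + 1/(n*ε) := by ring
    linarith
  have hs : 0 < √(n:ℝ) := Real.sqrt_pos.mpr hnR
  have ht3 : (t:ℝ) * 24 / √n ≤ (A * Real.log n + 1) * 24 / √n := by gcongr
  calc _ ≤ δ^2/2 + 1/(2*δ^2) * δ^4 := by gcongr; linarith
    _ = δ^2 := by field_simp; ring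

lemma log_sqrt_lim (A : ℝ) :
    Tendsto (fun n : ℕ => (A * Real.log n + 1) * 24 / √(n:ℝ)) atTop (nhds 0) := by
  have h1 : Tendsto (fun x : ℝ => Real.log x / x^(1/2:ℝ)) atTop (nhds 0) :=
    (isLittleO_log_rpow_atTop (by norm_num)).tendsto_div_nhds_zero
  have h2 : Tendsto (fun x : ℝ => (√x)⁻¹) atTop (nhds 0) :=
    tendsto_inv_atTop_zero.comp Real.tendsto_sqrt_atTop
  have h3 := ((h1.const_mul (24*A)).add (h2.const_mul 24)).comp tendsto_natCast_atTop_atTop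
  simp only [mul_zero, add_zero] at h3
  refine h3.congr fun n => ?_
  simp only [Function.comp, ← Real.sqrt_eq_rpow]
  ring

theorem quenched_QNS_of_iid_weights
    (ε : ℕ → ℝ) (hε_pos : ∀ n, 0 < ε n) (hε_half : ∀ n, ε n ≤ 1 / 2)
    (hε_anti : Antitone ε) (hε_lim : Tendsto ε atTop (nhds 0))
    (hnε : Tendsto (fun n : ℕ => (n : ℝ) * ε n) atTop atTop)
    (K : ℕ → ℝ) (hK : Tendsto (fun n => K n / Real.log (1 / ε n)) atTop atTop)
    (T : ℕ → ℕ) (hT : ∀ n, K n ≤ (T n : ℝ))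
    (h : (n : ℕ) → (Fin n → Bool) → Bool) :
    ∀ δ : ℝ, 0 < δ → ∃ N : ℕ, ∀ n ≥ N,
      ENNReal.ofReal (1 - δ) ≤
        weightMeas n (T n) {Θ | noiseCov n (ε n) (netOut n (T n) (h n) Θ) ≤ δ} := by
  intro δ hδ
  have hl : 0 < Real.log (22/21) := Real.log_pos (by norm_num)
  set A : ℝ := 2 / Real.log (22/21) with hA
  have hA0 : 0 < A := by positivity
  have hR : Tendsto (fun n : ℕ => 2 / (n * ε n) + 4 * ε n + (A * Real.log n + 1) * 24 / √(n:ℝ))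
      atTop (nhds 0) := by
    have := ((hnε.const_div_atTop 2).add (hε_lim.const_mul 4)).add (log_sqrt_lim A)
    simpa using this
  have hlog : Tendsto (fun n => Real.log (1 / ε n)) atTop atTop := by
    refine Real.tendsto_log_atTop.comp ?_
    simp only [one_div]
    exact tendsto_inv_nhdsGT_zero.comp (tendsto_nhdsWithin_iff.mpr
      ⟨hε_lim, Filter.Eventually.of_forall fun n => hε_pos n⟩)
  have hev := ((((hR.eventually_lt_const (show (0:ℝ) < δ^4 by positivity)).and
    (hlog.eventually_ge_atTop 1)).and (hK.eventually_ge_atTop (A+2))).and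
    (hnε.eventually_ge_atTop 1)).and (eventually_ge_atTop 440)
  obtain ⟨N, hN⟩ := eventually_atTop.mp hev
  refine ⟨N, fun n hn => ?_⟩
  obtain ⟨⟨⟨⟨c1, c2⟩, c3⟩, c4⟩, c5⟩ := hN n hn
  have hε0 := hε_pos n
  refine quenched_of n (T n) (ε n) (hε_half n) (h n) δ hδ ?_
  set L := Real.log (1 / ε n) with hL
  set t := ⌈A * L⌉₊ with ht
  have t1 : A * L ≤ t := Nat.le_ceil _
  have t2 : (t:ℝ) < A * L + 1 := Nat.ceil_lt_add_one (by positivity)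
  have hKn : (A+2) * L ≤ K n := by rwa [le_div_iff₀ (by linarith)] at c3
  have hTn : t + 1 ≤ T n := by
    have : ((t+1:ℕ):ℝ) ≤ T n := by
      push_cast
      have := hT n
      nlinarith
    exact_mod_cast this
  obtain ⟨m, hm⟩ := Nat.exists_eq_add_of_le hTn
  rw [hm]
  have hLn : L ≤ Real.log n := by
    apply Real.log_le_log (by positivity)
    rw [div_le_iff₀ hε0]; exact c4
  refine final_bound n c5 (ε n) hε0 (hε_half n) c4 t A δ hδ ?_ ?_ c1.le m (h n)
  · have e1 : (21/22:ℝ)^t = Real.exp (-(t * Real.log (22/21))) := by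
      rw [Real.exp_neg, Real.exp_nat_mul, Real.exp_log (by norm_num), ← inv_pow]; norm_num
    have e2 : (ε n)^2 = Real.exp (-(2 * L)) := by
      have := Real.exp_nat_mul L 2
      push_cast at this
      rw [Real.exp_neg, this, hL, Real.exp_log (by positivity)]; simp
    rw [e1, e2]
    apply Real.exp_le_exp.mpr
    have : 2 * L = A * L * Real.log (22/21) := by rw [hA]; field_simp
    rw [this]
    have := mul_le_mul_of_nonneg_right t1 hl.le
    linarith
  · have := mul_le_mul_of_nonneg_left hLn hA0.le
    linarith

end
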